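/- arXiv:2512.14378 — 4 statements merged into one kernel-verified Lean document; each statement's English description precedes it below -/
import Mathlib

section
/- Let n ≥ 8 be divisible by 4 and let H be a saturated orthogonal array OA(n,n−1,2,2). Then the sum of J₃(S)² over all unordered 3-subsets S of the n−1 columns of H equals n²(n−1)(n−2)/6. -/
open Finset

/-!
Expanding the squares turns `∑ J₃(S)²` into the sum, over all pairs of rows, of the third elementary
symmetric polynomial of their entrywise product. As the entries of that product square to `1`,
Newton's identities express this value through the inner product of the two rows alone. A saturated
array bordered by a column of ones is a Hadamard matrix, so the inner product of two rows is `n - 1`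
if they coincide and `-1` otherwise.
-/

section Newton

open MvPolynomial

variable {σ R : Type*} [Fintype σ] [CommRing R]

theorem two_mul_esymm_two : 2 * esymm σ R 2 = psum σ R 1 ^ 2 - psum σ R 2 := by
  have newton : 2 * esymm σ R 2 = -(psum σ R 2 - esymm σ R 1 * psum σ R 1) := by
    simpa [sum_filter, Nat.sum_antidiagonal_eq_sum_range_succ_mk, sum_range_succ, pow_succ,
      ← sub_eq_add_neg] using mul_esymm_eq_sum σ R 2
  rw [newton, esymm_one, ← psum_one]
  ring

theorem six_mul_esymm_three :
    6 * esymm σ R 3 = psum σ R 1 ^ 3 - 3 * psum σ R 1 * psum σ R 2 + 2 * psum σ R 3 := by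
  have newton : 3 * esymm σ R 3 =
      psum σ R 3 - esymm σ R 1 * psum σ R 2 + esymm σ R 2 * psum σ R 1 := by
    simpa [sum_filter, Nat.sum_antidiagonal_eq_sum_range_succ_mk, sum_range_succ, pow_succ,
      ← sub_eq_add_neg] using mul_esymm_eq_sum σ R 3
  rw [esymm_one, ← psum_one] at newton
  linear_combination 2 * newton + psum σ R 1 * two_mul_esymm_two (σ := σ) (R := R)

theorem six_mul_sum_powersetCard_three_prod (x : σ → R) :
    6 * ∑ S ∈ univ.powersetCard 3, ∏ j ∈ S, x j =
      (∑ j, x j) ^ 3 - 3 * (∑ j, x j) * ∑ j, x j ^ 2 + 2 * ∑ j, x j ^ 3 := by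
  simpa [esymm, psum] using congrArg (aeval x) (six_mul_esymm_three (σ := σ) (R := R))

theorem six_mul_sum_powersetCard_three_prod_of_sq_eq_one {x : σ → R} (hx : ∀ j, x j ^ 2 = 1) :
    6 * ∑ S ∈ univ.powersetCard 3, ∏ j ∈ S, x j =
      (∑ j, x j) ^ 3 - (3 * Fintype.card σ - 2) * ∑ j, x j := by
  have hcube (j : σ) : x j ^ 3 = x j := by rw [pow_succ, hx, one_mul]
  rw [six_mul_sum_powersetCard_three_prod]
  simp only [hx, hcube, sum_const, card_univ, nsmul_eq_mul, mul_one]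
  ring

end Newton

section Matrix

open Matrix

variable {m n R : Type*} [Fintype m] [Fintype n] [DecidableEq m] [DecidableEq n] [CommRing R]

theorem mul_eq_smul_one_symm {A B : Matrix n n R} {r : R} (hr : IsRegular r)
    (hAB : A * B = r • 1) : B * A = r • 1 := by
  have hdet : IsRegular (A.det * B.det) := by
    rw [← det_mul, hAB, det_smul, det_one, mul_one]
    exact hr.pow _
  have hA : IsLeftRegular A := (isRegular_of_isLeftRegular_det hdet.of_mul_left.left).left
  refine hA (?_ : A * (B * A) = A * r • 1)
  rw [← Matrix.mul_assoc, hAB, smul_mul, Matrix.one_mul, Matrix.mul_smul, Matrix.mul_one]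

theorem mul_eq_smul_one_symm_of_card_eq {A : Matrix m n R} {B : Matrix n m R} {r : R}
    (hmn : Fintype.card m = Fintype.card n) (hr : IsRegular r) (hAB : A * B = r • 1) :
    B * A = r • 1 := by
  let e : m ≃ n := Fintype.equivOfCardEq hmn
  have hreindex : A.submatrix id e * B.submatrix e id = r • 1 := by
    rw [submatrix_mul_equiv, hAB, submatrix_id_id]
  have hswap : (B * A).submatrix e e = r • 1 := by
    rw [submatrix_mul B A e id e Function.bijective_id, mul_eq_smul_one_symm hr hreindex]
  simpa [submatrix_smul] using congrArg (·.submatrix e.symm e.symm) hswap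

end Matrix

section Design

open scoped Matrix

variable {ι κ R : Type*} [Fintype ι]

/-- The J-characteristic `J_s(S)`, `s = #S`, of a set `S` of columns of the design `H`, whose rows
are indexed by `ι` and columns by `κ`. -/
def jCharacteristic [CommSemiring R] (H : ι → κ → R) (S : Finset κ) : R :=
  ∑ i, ∏ j ∈ S, H i j

theorem sum_jCharacteristic_sq [CommSemiring R] (H : ι → κ → R) (𝒮 : Finset (Finset κ)) :
    ∑ S ∈ 𝒮, jCharacteristic H S ^ 2 = ∑ i, ∑ i', ∑ S ∈ 𝒮, ∏ j ∈ S, H i j * H i' j := by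
  simp only [jCharacteristic, sq, sum_mul_sum, ← prod_mul_distrib]
  rw [sum_comm]
  exact sum_congr rfl fun _ _ ↦ sum_comm

/-- The design `H` bordered by a column of ones, which is indexed by `none`. For a saturated
orthogonal array this is a Hadamard matrix. -/
def onesBordered [One R] (H : ι → κ → R) : Matrix ι (Option κ) R :=
  Matrix.of fun i o ↦ o.elim 1 (H i)

variable [Fintype κ]

/-- A saturated two-level orthogonal array of strength two, `OA(n, n - 1, 2, 2)` with `n = |ι|`.
The levels `±1` are replaced by arbitrary square roots of `1` in a commutative ring. -/
structure IsSaturatedOA [CommRing R] (H : ι → κ → R) : Prop where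
  card_eq : Fintype.card ι = Fintype.card κ + 1
  sq_eq_one (i : ι) (j : κ) : H i j ^ 2 = 1
  sum_col (j : κ) : ∑ i, H i j = 0
  sum_col_mul_col (j k : κ) (hjk : j ≠ k) : ∑ i, H i j * H i k = 0

namespace IsSaturatedOA

variable [CommRing R] {H : ι → κ → R}

theorem card_cols (hH : IsSaturatedOA H) : (Fintype.card κ : R) = Fintype.card ι - 1 := by
  rw [hH.card_eq, Nat.cast_succ, add_sub_cancel_right]

theorem sum_row_mul_self (hH : IsSaturatedOA H) (i : ι) :
    ∑ j, H i j * H i j = Fintype.card ι - 1 := by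
  simp only [← sq, hH.sq_eq_one, sum_const, card_univ, nsmul_eq_mul, mul_one, hH.card_cols]

theorem transpose_onesBordered_mul_onesBordered [DecidableEq κ] (hH : IsSaturatedOA H) :
    (onesBordered H)ᵀ * onesBordered H = (Fintype.card ι : R) • 1 := by
  ext (_ | j) (_ | k)
  · simp [onesBordered, Matrix.mul_apply]
  · simp [onesBordered, Matrix.mul_apply, hH.sum_col]
  · simp [onesBordered, Matrix.mul_apply, hH.sum_col]
  · obtain rfl | hjk := eq_or_ne j k
    · simp [onesBordered, Matrix.mul_apply, ← sq, hH.sq_eq_one]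
    · simp [onesBordered, Matrix.mul_apply, hjk, hH.sum_col_mul_col j k hjk]

theorem onesBordered_mul_transpose_onesBordered [DecidableEq ι] (hH : IsSaturatedOA H)
    (hcard : IsRegular (Fintype.card ι : R)) :
    onesBordered H * (onesBordered H)ᵀ = (Fintype.card ι : R) • 1 := by
  classical
  exact mul_eq_smul_one_symm_of_card_eq (by rw [Fintype.card_option, hH.card_eq]) hcard
    hH.transpose_onesBordered_mul_onesBordered

theorem sum_row_mul_row_of_ne (hH : IsSaturatedOA H) (hcard : IsRegular (Fintype.card ι : R))
    {i i' : ι} (hi : i ≠ i') : ∑ j, H i j * H i' j = -1 := by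
  classical
  have hborder : 1 + ∑ j, H i j * H i' j = 0 := by
    simpa [onesBordered, Matrix.mul_apply, Fintype.sum_option, hi] using
      congrFun₂ (hH.onesBordered_mul_transpose_onesBordered hcard) i i'
  exact eq_neg_of_add_eq_zero_right hborder

theorem six_mul_sum_powersetCard_three_prod_row_mul_row [DecidableEq ι] (hH : IsSaturatedOA H)
    (hcard : IsRegular (Fintype.card ι : R)) (i i' : ι) :
    6 * ∑ S ∈ univ.powersetCard 3, ∏ j ∈ S, H i j * H i' j =
      3 * ((Fintype.card ι : R) - 2) + if i = i' then
        (Fintype.card ι : R) * (Fintype.card ι - 2) * (Fintype.card ι - 4) else 0 := by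
  rw [six_mul_sum_powersetCard_three_prod_of_sq_eq_one fun j ↦ by
    rw [mul_pow, hH.sq_eq_one, hH.sq_eq_one, one_mul], hH.card_cols]
  split_ifs with hi
  · rw [← hi, hH.sum_row_mul_self]
    ring
  · rw [hH.sum_row_mul_row_of_ne hcard hi]
    ring

end IsSaturatedOA

theorem sum_J3_sq_saturated_general [CommRing R] {H : ι → κ → R} (hH : IsSaturatedOA H)
    (hcard : IsRegular (Fintype.card ι : R)) :
    6 * ∑ S ∈ univ.powersetCard 3, jCharacteristic H S ^ 2 =
      (Fintype.card ι : R) ^ 2 * (Fintype.card ι - 1) * (Fintype.card ι - 2) := by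
  classical
  rw [sum_jCharacteristic_sq]
  simp only [mul_sum (s := (univ : Finset ι)),
    hH.six_mul_sum_powersetCard_three_prod_row_mul_row hcard, sum_add_distrib, sum_ite_eq, mem_univ,
    if_true, sum_const, card_univ, nsmul_eq_mul]
  ring

end Design

/-- For a saturated orthogonal array `OA(n, n-1, 2, 2)` (entries `±1`,
balanced columns, pairwise orthogonal columns), the sum of `J₃(S)²` over all
unordered 3-subsets `S` of the `n-1` columns equals `n²(n-1)(n-2)/6`. -/
theorem sum_J3_sq_saturated (n : ℕ) (hn : 8 ≤ n) (h4 : 4 ∣ n)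
    (H : Fin n → Fin (n - 1) → ℤ)
    (hpm : ∀ i j, H i j = 1 ∨ H i j = -1)
    (hbal : ∀ j, ∑ i : Fin n, H i j = 0)
    (horth : ∀ j k : Fin (n - 1), j ≠ k → ∑ i : Fin n, H i j * H i k = 0) :
    ∑ S ∈ (Finset.univ : Finset (Fin (n - 1))).powersetCard 3,
        (∑ i : Fin n, ∏ j ∈ S, H i j) ^ 2
      = (n : ℤ) ^ 2 * ((n : ℤ) - 1) * ((n : ℤ) - 2) / 6 := by
  have hH : IsSaturatedOA H :=
    ⟨by simp only [Fintype.card_fin]; lia, fun i j ↦ sq_eq_one_iff.2 (hpm i j), hbal, horth⟩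
  have hcard : IsRegular (Fintype.card (Fin n) : ℤ) :=
    .of_ne_zero (by simp only [Fintype.card_fin]; lia)
  refine Int.eq_ediv_of_mul_eq_right (by norm_num) ?_
  simpa only [Fintype.card_fin, jCharacteristic] using sum_J3_sq_saturated_general hH hcard
end

section
/- Let n ≥ 8 be divisible by 4, let H be a saturated orthogonal array OA(n,n−1,2,2), and let two distinct fixed columns of H be removed. Then the sum of J₃(S)² over all unordered 3-subsets S of the remaining n−3 columns equals n²(n−4)(n−5)/6. -/
open Finset

/-!
Adjoining a constant column to a saturated array gives a Hadamard matrix, so Parseval's identity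
holds for its columns. Applied to the entrywise product of two columns `j ≠ k`, it says that the
values `J₃({j, k, l})²` over the remaining columns `l` add up to `n²`: the weights `J₃²` turn the
`3`-subsets of columns into a `2`-design. In such a design, count with weights the pairs
`(x, y) ∈ D × Dᶜ` contained in a triple: a triple meeting both `D` and `Dᶜ` contains exactly two of
them, whatever its shape, so the total weight of the mixed triples depends only on `#D`. For
`#D = 2` all other triples lie in `Dᶜ`.
-/

open Matrix

variable {ι κ M R : Type*}

section WeightedDesign

variable [Fintype κ] [DecidableEq κ]

theorem sum_powersetCard_filter_superset [AddCommMonoid M] (f : Finset κ → M) (P : Finset κ) :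
    ∑ S ∈ univ.powersetCard (#P + 1) with P ⊆ S, f S = ∑ j ∈ Pᶜ, f (insert j P) := by
  have himage : (univ.powersetCard (#P + 1)).filter (P ⊆ ·) = Pᶜ.image (insert · P) := by
    ext S
    simp only [mem_filter, mem_powersetCard_univ, mem_image, mem_compl]
    constructor
    · rintro ⟨hcard, hPS⟩
      exact exists_eq_insert_iff.2 ⟨hPS, hcard.symm⟩
    · rintro ⟨j, hj, rfl⟩
      exact ⟨card_insert_of_notMem hj, subset_insert j P⟩
  rw [himage, sum_image P.insert_inj_on']

/-- A weighted `2`-`(v, k, lam)` design on the point set `κ`: the `k`-subsets are the blocks, `w`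
gives their weights, and the blocks through any two points have total weight `lam`. The values of
`w` on sets of other sizes are irrelevant. -/
def IsWeightedPairDesign [AddCommMonoid M] (k : ℕ) (w : Finset κ → M) (lam : M) : Prop :=
  ∀ P : Finset κ, #P = 2 → ∑ S ∈ univ.powersetCard k with P ⊆ S, w S = lam

namespace IsWeightedPairDesign

theorem sum_card_filter_nsmul [AddCommMonoid M] {k : ℕ} {w : Finset κ → M} {lam : M}
    (hw : IsWeightedPairDesign k w lam) {E : Finset (κ × κ)} (hE : ∀ p ∈ E, p.1 ≠ p.2) :
    ∑ S ∈ univ.powersetCard k, #{p ∈ E | p.1 ∈ S ∧ p.2 ∈ S} • w S = #E • lam := by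
  calc ∑ S ∈ univ.powersetCard k, #{p ∈ E | p.1 ∈ S ∧ p.2 ∈ S} • w S
      = ∑ S ∈ univ.powersetCard k, ∑ p ∈ E with p.1 ∈ S ∧ p.2 ∈ S, w S := by
        simp only [sum_const]
    _ = ∑ p ∈ E, ∑ S ∈ univ.powersetCard k with p.1 ∈ S ∧ p.2 ∈ S, w S := by
        simp only [sum_filter]
        exact sum_comm
    _ = ∑ _p ∈ E, lam := by
        refine sum_congr rfl fun p hp => ?_
        simpa only [insert_subset_iff, singleton_subset_iff] using
          hw {p.1, p.2} (card_pair (hE p hp))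
    _ = #E • lam := sum_const lam

theorem mul_sum_powersetCard [CommRing R] {k : ℕ} {w : Finset κ → R} {lam : R}
    (hw : IsWeightedPairDesign k w lam) :
    (k * (k - 1) : R) * ∑ S ∈ univ.powersetCard k, w S
      = Fintype.card κ * (Fintype.card κ - 1) * lam := by
  have hcast (T : Finset κ) : (#T.offDiag : R) = #T * (#T - 1) := by
    rw [offDiag_card, Nat.cast_sub (Nat.le_mul_self _)]
    push_cast
    ring
  have hcount := hw.sum_card_filter_nsmul (E := univ.offDiag) fun p hp => (mem_offDiag.1 hp).2.2
  rw [nsmul_eq_mul, hcast, card_univ] at hcount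
  rw [← hcount, mul_sum]
  refine sum_congr rfl fun S hS => ?_
  have hpairs : {p ∈ (univ : Finset κ).offDiag | p.1 ∈ S ∧ p.2 ∈ S} = S.offDiag := by
    ext p
    simp only [mem_filter, mem_offDiag, mem_univ, true_and]
    tauto
  rw [hpairs, nsmul_eq_mul, hcast, mem_powersetCard_univ.1 hS]

theorem sum_card_inter_mul_card_sdiff [Semiring R] {k : ℕ} {w : Finset κ → R} {lam : R}
    (hw : IsWeightedPairDesign k w lam) (D : Finset κ) :
    ∑ S ∈ univ.powersetCard k, (#(S ∩ D) * #(S \ D) : R) * w S = #D * #Dᶜ * lam := by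
  have hne : ∀ p ∈ D ×ˢ Dᶜ, p.1 ≠ p.2 := fun p hp h =>
    mem_compl.1 (mem_product.1 hp).2 (h ▸ (mem_product.1 hp).1)
  have hcount := hw.sum_card_filter_nsmul hne
  simp only [filter_product, card_product, filter_mem_eq_inter, nsmul_eq_mul, Nat.cast_mul]
    at hcount
  simpa only [inter_comm D, inter_comm Dᶜ, ← sdiff_eq_inter_compl] using hcount

end IsWeightedPairDesign

theorem card_inter_mul_card_sdiff_of_card_eq_three {S : Finset κ} (hS : #S = 3) (D : Finset κ) :
    #(S ∩ D) * #(S \ D) = if S ⊆ D ∨ S ⊆ Dᶜ then 0 else 2 := by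
  have hsum : #(S ∩ D) + #(S \ D) = 3 := (card_inter_add_card_sdiff S D).trans hS
  have hD : S ⊆ D ↔ #(S \ D) = 0 := by rw [card_eq_zero, sdiff_eq_empty_iff_subset]
  have hDc : S ⊆ Dᶜ ↔ #(S ∩ D) = 0 := by
    rw [card_eq_zero, ← disjoint_iff_inter_eq_empty, subset_compl_iff_disjoint_right]
  simp only [hD, hDc]
  obtain ⟨hs, ht⟩ : #(S ∩ D) ≤ 3 ∧ #(S \ D) = 3 - #(S ∩ D) := by omega
  rw [ht]
  interval_cases #(S ∩ D) <;> rfl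

theorem sum_powersetCard_add_sum_powersetCard_compl [AddCommMonoid M] {k : ℕ} (hk : k ≠ 0)
    (f : Finset κ → M) (D : Finset κ) :
    ∑ S ∈ D.powersetCard k, f S + ∑ S ∈ Dᶜ.powersetCard k, f S
      = ∑ S ∈ univ.powersetCard k with S ⊆ D ∨ S ⊆ Dᶜ, f S := by
  have hdisj : Disjoint (D.powersetCard k) (Dᶜ.powersetCard k) := by
    rw [disjoint_left]
    intro S hS hS'
    obtain ⟨hSD, hcard⟩ := mem_powersetCard.1 hS
    have hempty := (disjoint_compl_right.mono hSD (mem_powersetCard.1 hS').1).eq_bot_of_self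
    exact hk (by rw [← hcard, hempty, bot_eq_empty, card_empty])
  rw [← sum_union hdisj]
  congr 1
  ext S
  simp only [mem_union, mem_powersetCard, mem_filter, subset_univ]
  tauto

theorem IsWeightedPairDesign.six_mul_sum_add_sum_compl [CommRing R] {w : Finset κ → R} {lam : R}
    (hw : IsWeightedPairDesign 3 w lam) (D : Finset κ) :
    6 * (∑ S ∈ D.powersetCard 3, w S + ∑ S ∈ Dᶜ.powersetCard 3, w S)
      = (Fintype.card κ * (Fintype.card κ - 1) - 3 * (#D * #Dᶜ)) * lam := by
  have hall : 6 * ∑ S ∈ univ.powersetCard 3, w S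
      = Fintype.card κ * (Fintype.card κ - 1) * lam := by
    rw [← hw.mul_sum_powersetCard]
    norm_num
  rw [sum_powersetCard_add_sum_powersetCard_compl three_ne_zero, sub_mul, mul_assoc 3, ← hall,
    ← hw.sum_card_inter_mul_card_sdiff D, sum_filter, mul_sum, mul_sum, mul_sum,
    ← sum_sub_distrib]
  refine sum_congr rfl fun S hS => ?_
  have hmixed := card_inter_mul_card_sdiff_of_card_eq_three (mem_powersetCard_univ.1 hS) D
  rw [← Nat.cast_mul, hmixed]
  split_ifs <;> push_cast <;> ring

end WeightedDesign

theorem vecMul_dotProduct_star_vecMul [Fintype ι] [DecidableEq ι] [Fintype κ] [CommSemiring R]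
    [StarRing R] {A : Matrix ι κ R} {c : R} (hA : A * Aᴴ = c • 1) (f : ι → R) :
    f ᵥ* A ⬝ᵥ star (f ᵥ* A) = c * (f ⬝ᵥ star f) := by
  rw [star_vecMul, dotProduct_mulVec, vecMul_vecMul, hA, vecMul_smul, vecMul_one, smul_dotProduct,
    smul_eq_mul]

section SaturatedArray

variable [Fintype ι]

/-- The `J`-characteristic of a set `S` of columns of a two-level design; its order is `#S`. -/
def jChar (H : ι → κ → ℤ) (S : Finset κ) : ℤ :=
  ∑ i, ∏ j ∈ S, H i j

/-- The square matrix obtained from `H` by adjoining an all-ones column, at index `none`; the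
equivalence `e` indexes the rows of `H` by the new set of columns. -/
def adjoinOnes (H : ι → κ → ℤ) (e : Option κ ≃ ι) : Matrix (Option κ) (Option κ) ℤ :=
  Matrix.of fun o p => p.elim 1 (H (e o))

/-- A saturated orthogonal array `OA(n, n - 1, 2, 2)` with rows `ι` and columns `κ`. -/
structure IsSaturatedOA_s2 [Fintype κ] (H : ι → κ → ℤ) : Prop where
  card_rows : Fintype.card ι = Fintype.card κ + 1
  eq_one_or_neg_one : ∀ i j, H i j = 1 ∨ H i j = -1
  sum_col_eq_zero : ∀ j, ∑ i, H i j = 0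
  sum_col_mul_eq_zero : ∀ j k, j ≠ k → ∑ i, H i j * H i k = 0

namespace IsSaturatedOA_s2

variable [Fintype κ] {H : ι → κ → ℤ}

theorem mul_self_eq_one (hH : IsSaturatedOA_s2 H) (i : ι) (j : κ) : H i j * H i j = 1 :=
  mul_self_eq_one_iff.2 (hH.eq_one_or_neg_one i j)

theorem jChar_singleton (hH : IsSaturatedOA_s2 H) (j : κ) : jChar H {j} = 0 := by
  simpa only [jChar, prod_singleton] using hH.sum_col_eq_zero j

theorem jChar_eq_zero_of_card_eq_two (hH : IsSaturatedOA_s2 H) {P : Finset κ} (hP : #P = 2) :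
    jChar H P = 0 := by
  classical
  obtain ⟨j, k, hjk, rfl⟩ := card_eq_two.1 hP
  simpa only [jChar, prod_pair hjk] using hH.sum_col_mul_eq_zero j k hjk

theorem isHadamard_adjoinOnes [DecidableEq κ] (hH : IsSaturatedOA_s2 H) (e : Option κ ≃ ι) :
    (adjoinOnes H e).IsHadamard := by
  have hentry (o p : Option κ) : adjoinOnes H e o p ∈ unitary ℤ := by
    rw [Unitary.mem_iff_eq_one_or_eq_neg_one]
    cases p with
    | none => exact Or.inl rfl
    | some j => exact hH.eq_one_or_neg_one (e o) j
  have hgram : (adjoinOnes H e)ᵀ * (adjoinOnes H e)ᵀᴴ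
      = (Fintype.card (Option κ) : ℤ) • (1 : Matrix (Option κ) (Option κ) ℤ) := by
    ext p q
    simp only [mul_apply, conjTranspose_apply, transpose_apply, adjoinOnes, of_apply, star_trivial]
    rw [e.sum_comp fun i => p.elim 1 (H i) * q.elim 1 (H i)]
    rcases p with _ | j <;> rcases q with _ | k
    · simp [hH.card_rows]
    · simp [hH.sum_col_eq_zero]
    · simp [hH.sum_col_eq_zero]
    · obtain rfl | hjk := eq_or_ne j k
      · simp [hH.mul_self_eq_one, hH.card_rows]
      · simp [hH.sum_col_mul_eq_zero j k hjk, hjk]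
  refine isHadamard_transpose_iff.1 (.of_mul_conjTranspose (fun p o => hentry o p) hgram ?_)
  exact IsRegular.of_ne_zero (Nat.cast_ne_zero.2 Fintype.card_ne_zero)

theorem sum_sq_add_sum_sum_mul_sq (hH : IsSaturatedOA_s2 H) (f : ι → ℤ) :
    (∑ i, f i) ^ 2 + ∑ j, (∑ i, f i * H i j) ^ 2 = Fintype.card ι * ∑ i, f i ^ 2 := by
  classical
  obtain ⟨e⟩ : Nonempty (Option κ ≃ ι) :=
    Fintype.card_eq.1 (Fintype.card_option.trans hH.card_rows.symm)
  have hparseval :=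
    vecMul_dotProduct_star_vecMul (hH.isHadamard_adjoinOnes e).mul_conjTranspose (f ∘ e)
  have hcol (p : Option κ) :
      ((f ∘ e) ᵥ* adjoinOnes H e) p = ∑ i, f i * p.elim 1 (H i) :=
    e.sum_comp fun i => f i * p.elim 1 (H i)
  have hnorm : (f ∘ e) ⬝ᵥ (f ∘ e) = ∑ i, f i ^ 2 := by
    simp only [sq]
    exact e.sum_comp fun i => f i * f i
  rw [star_trivial, star_trivial, hnorm, Fintype.card_congr e] at hparseval
  simpa [dotProduct, hcol, Fintype.sum_option, ← sq] using hparseval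

variable [DecidableEq κ]

theorem sum_sq_jChar_insert (hH : IsSaturatedOA_s2 H) (P : Finset κ) :
    ∑ j ∈ Pᶜ, jChar H (insert j P) ^ 2
      = Fintype.card ι ^ 2 - jChar H P ^ 2 - ∑ j ∈ P, jChar H (P.erase j) ^ 2 := by
  have hparseval := hH.sum_sq_add_sum_sum_mul_sq fun i => ∏ k ∈ P, H i k
  have hnorm : ∑ i, (∏ k ∈ P, H i k) ^ 2 = Fintype.card ι := by
    simp [sq, ← prod_mul_distrib, hH.mul_self_eq_one]
  have hnotMem : ∀ j ∈ Pᶜ, ∑ i, (∏ k ∈ P, H i k) * H i j = jChar H (insert j P) := fun j hj =>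
    sum_congr rfl fun i _ => by rw [prod_insert (mem_compl.1 hj), mul_comm]
  have hmem : ∀ j ∈ P, ∑ i, (∏ k ∈ P, H i k) * H i j = jChar H (P.erase j) := fun j hj =>
    sum_congr rfl fun i _ => by
      rw [← prod_erase_mul P _ hj, mul_assoc, hH.mul_self_eq_one, mul_one]
  rw [hnorm, ← sum_add_sum_compl P, sum_congr rfl fun j hj => congrArg (· ^ 2) (hmem j hj),
    sum_congr rfl fun j hj => congrArg (· ^ 2) (hnotMem j hj)] at hparseval
  rw [jChar]
  linear_combination hparseval

theorem isWeightedPairDesign_sq_jChar (hH : IsSaturatedOA_s2 H) :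
    IsWeightedPairDesign 3 (fun S => jChar H S ^ 2) ((Fintype.card ι : ℤ) ^ 2) := by
  intro P hP
  have herase : ∀ j ∈ P, jChar H (P.erase j) ^ 2 = 0 := fun j hj => by
    obtain ⟨k, hk⟩ := card_eq_one.1 ((card_erase_of_mem hj).trans (by rw [hP]))
    rw [hk, hH.jChar_singleton, zero_pow two_ne_zero]
  have hinsert := sum_powersetCard_filter_superset (fun S => jChar H S ^ 2) P
  rw [hP] at hinsert
  rw [hinsert, hH.sum_sq_jChar_insert, Finset.sum_eq_zero herase,
    hH.jChar_eq_zero_of_card_eq_two hP]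
  ring

end IsSaturatedOA_s2

end SaturatedArray

theorem sum_J3_sq_delete_two_general [Fintype ι] [Fintype κ] [DecidableEq κ] {H : ι → κ → ℤ}
    (hH : IsSaturatedOA_s2 H) (D : Finset κ) :
    6 * (∑ S ∈ D.powersetCard 3, jChar H S ^ 2 + ∑ S ∈ Dᶜ.powersetCard 3, jChar H S ^ 2)
      = (Fintype.card ι : ℤ) ^ 2 *
        ((Fintype.card ι - 1) * (Fintype.card ι - 2) - 3 * (#D * #Dᶜ)) := by
  rw [hH.isWeightedPairDesign_sq_jChar.six_mul_sum_add_sum_compl, hH.card_rows]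
  push_cast
  ring

theorem IsSaturatedOA_s2.six_mul_sum_sq_jChar_compl_pair [Fintype ι] [Fintype κ] [DecidableEq κ]
    {H : ι → κ → ℤ} (hH : IsSaturatedOA_s2 H) {a b : κ} (hab : a ≠ b) :
    6 * ∑ S ∈ ({a, b}ᶜ : Finset κ).powersetCard 3, jChar H S ^ 2
      = (Fintype.card ι : ℤ) ^ 2 * (Fintype.card ι - 4) * (Fintype.card ι - 5) := by
  have hcompl : (#({a, b}ᶜ : Finset κ) : ℤ) = Fintype.card ι - 3 := by
    have hadd := card_add_card_compl ({a, b} : Finset κ)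
    rw [card_pair hab] at hadd
    have hrows := hH.card_rows
    omega
  have hpair : ({a, b} : Finset κ).powersetCard 3 = ∅ :=
    powersetCard_eq_empty.2 (by rw [card_pair hab]; norm_num)
  have hsum := sum_J3_sq_delete_two_general hH {a, b}
  rw [hpair, sum_empty, zero_add, hcompl, card_pair hab] at hsum
  rw [hsum]
  push_cast
  ring

/-- Deleting two distinct fixed columns from a saturated `OA(n, n-1, 2, 2)`,
the sum of `J₃(S)²` over all unordered 3-subsets of the remaining `n-3` columns
equals `n²(n-4)(n-5)/6`. -/
theorem sum_J3_sq_delete_two (n : ℕ) (hn : 8 ≤ n) (h4 : 4 ∣ n)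
    (H : Fin n → Fin (n - 1) → ℤ)
    (hpm : ∀ i j, H i j = 1 ∨ H i j = -1)
    (hbal : ∀ j, ∑ i : Fin n, H i j = 0)
    (horth : ∀ j k : Fin (n - 1), j ≠ k → ∑ i : Fin n, H i j * H i k = 0)
    (a b : Fin (n - 1)) (hab : a ≠ b) :
    ∑ S ∈ ((Finset.univ : Finset (Fin (n - 1))) \ {a, b}).powersetCard 3,
        (∑ i : Fin n, ∏ j ∈ S, H i j) ^ 2
      = (n : ℤ) ^ 2 * ((n : ℤ) - 4) * ((n : ℤ) - 5) / 6 := by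
  have hH : IsSaturatedOA_s2 H := ⟨by simp only [Fintype.card_fin]; omega, hpm, hbal, horth⟩
  have hsum := hH.six_mul_sum_sq_jChar_compl_pair hab
  rw [Fintype.card_fin, compl_eq_univ_sdiff] at hsum
  exact (Int.ediv_eq_of_eq_mul_right (by norm_num) hsum.symm).symm
end

section
/- Let n ≥ 8 be divisible by 4, let H be a saturated orthogonal array OA(n,n−1,2,2), and let c_{i₀} be a fixed column of H. Then the sum of J₃(c_{i₀},c_j,c_k)² over all unordered pairs {c_j,c_k} of distinct columns of H different from c_{i₀} equals n²(n−2)/2. -/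
open Finset

/-! Adjoining the all-ones column to a saturated array `X` with `n` runs gives a square matrix whose
columns are orthogonal of squared norm `n`, so its rows are too: `X * Xᵀ = n - J`, with `J` the
all-ones matrix. Summed over all ordered pairs of columns, `J₃(j₀, j, k)²` depends on `X` only
through `X * Xᵀ` and the column `j₀`, and the pairs with a repetition among `j₀, j, k` contribute
nothing. -/

section Finset

variable {α M : Type*} [DecidableEq α] [AddCommMonoid M]

theorem two_nsmul_sum_powersetCard_two (s : Finset α) (f : Finset α → M) :
    2 • ∑ S ∈ s.powersetCard 2, f S = ∑ p ∈ s.offDiag, f {p.1, p.2} := by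
  have pair_mem : ∀ p ∈ s.offDiag, {p.1, p.2} ∈ s.powersetCard 2 := fun p hp ↦ by
    obtain ⟨h₁, h₂, hne⟩ := mem_offDiag.1 hp
    exact mem_powersetCard.2 ⟨by grind, card_pair hne⟩
  rw [← sum_fiberwise_of_maps_to pair_mem, smul_sum]
  refine sum_congr rfl fun S hS ↦ ?_
  obtain ⟨hSs, hcard⟩ := mem_powersetCard.1 hS
  obtain ⟨a, b, hab, rfl⟩ := card_eq_two.1 hcard
  have fiber_eq : {p ∈ s.offDiag | ({p.1, p.2} : Finset α) = {a, b}} = {(a, b), (b, a)} := by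
    ext ⟨x, y⟩
    simp only [mem_filter, mem_offDiag, mem_insert, mem_singleton, Prod.mk.injEq,
      ← coe_inj, coe_pair, Set.pair_eq_pair_iff]
    grind
  rw [fiber_eq, sum_pair (by simp [hab]), pair_comm b a, two_nsmul]

end Finset

section Matrix

open Matrix

variable {ι κ R : Type*} [Fintype ι] [Fintype κ]

theorem mul_eq_smul_one_of_mul_eq_smul_one [DecidableEq ι] [DecidableEq κ] [CommRing R]
    {A : Matrix ι κ R} {B : Matrix κ ι R} {c : R} (hcard : Fintype.card ι = Fintype.card κ)
    (hc : IsRegular c) (hAB : A * B = c • (1 : Matrix ι ι R)) :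
    B * A = c • (1 : Matrix κ κ R) := by
  let e : κ ≃ ι := Fintype.equivOfCardEq hcard.symm
  let A' : Matrix κ κ R := A.submatrix e id
  let B' : Matrix κ κ R := B.submatrix id e
  have hA'B' : A' * B' = c • (1 : Matrix κ κ R) := by
    rw [← submatrix_mul _ _ _ _ _ Function.bijective_id, hAB]
    simp [submatrix_smul]
  have hdet : IsRegular A'.det := by
    have : IsRegular (A'.det * B'.det) := by
      simpa [← det_mul, hA'B'] using hc.pow (Fintype.card κ)
    exact this.of_mul_left
  have hB'A' : B' * A' = c • (1 : Matrix κ κ R) := by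
    apply (isRegular_of_isLeftRegular_det hdet.left).left
    change A' * (B' * A') = A' * (c • 1)
    rw [← Matrix.mul_assoc, hA'B', smul_mul, Matrix.one_mul, Matrix.mul_smul, Matrix.mul_one]
  rwa [submatrix_mul_equiv, submatrix_id_id] at hB'A'

theorem sum_sum_sum_mul_mul_sq [CommSemiring R] (u : ι → R) (X : Matrix ι κ R) :
    ∑ j, ∑ k, (∑ i, u i * X i j * X i k) ^ 2 =
      ∑ a, ∑ b, u a * u b * ((X * Xᵀ) a b) ^ 2 := by
  calc ∑ j, ∑ k, (∑ i, u i * X i j * X i k) ^ 2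
      = ∑ p : κ × κ, ∑ q : ι × ι,
          u q.1 * u q.2 * ((X q.1 p.1 * X q.2 p.1) * (X q.1 p.2 * X q.2 p.2)) := by
        rw [Fintype.sum_prod_type]
        refine sum_congr rfl fun j _ ↦ sum_congr rfl fun k _ ↦ ?_
        rw [sq, Fintype.sum_mul_sum, Fintype.sum_prod_type]
        exact sum_congr rfl fun a _ ↦ sum_congr rfl fun b _ ↦ by ring
    _ = ∑ q : ι × ι, ∑ p : κ × κ,
          u q.1 * u q.2 * ((X q.1 p.1 * X q.2 p.1) * (X q.1 p.2 * X q.2 p.2)) := sum_comm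
    _ = ∑ a, ∑ b, u a * u b * ((X * Xᵀ) a b) ^ 2 := by
        simp only [Fintype.sum_prod_type, ← mul_sum, ← sum_mul, sq, mul_apply,
          transpose_apply]

end Matrix

/-- A saturated two-level orthogonal array of strength 2, with runs indexed by `ι` and factors by
`κ`. The levels are the elements `±1` of a ring `R`, which is `ℤ` in the classical case; in general
balance and orthogonality are only required to hold in `R`. -/
structure IsSaturatedOA_s8 {ι κ R : Type*} [Fintype ι] [Fintype κ] [CommRing R]
    (X : Matrix ι κ R) : Prop where
  card_eq : Fintype.card ι = Fintype.card κ + 1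
  eq_one_or_neg_one : ∀ i j, X i j = 1 ∨ X i j = -1
  sum_col : ∀ j, ∑ i, X i j = 0
  orthogonal : ∀ j k, j ≠ k → ∑ i, X i j * X i k = 0

/-- The J-characteristic of order three of the columns `j`, `k`, `l` of `X`, which are allowed to
coincide so that it can be summed over all ordered pairs of columns. -/
def jThree {ι κ R : Type*} [Fintype ι] [CommRing R] (X : Matrix ι κ R) (j k l : κ) : R :=
  ∑ i, X i j * X i k * X i l

namespace IsSaturatedOA_s8

open Matrix

variable {ι κ R : Type*} [Fintype ι] [Fintype κ] [CommRing R] {X : Matrix ι κ R}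

theorem mul_self_apply (hX : IsSaturatedOA_s8 X) (i : ι) (j : κ) : X i j * X i j = 1 := by
  rcases hX.eq_one_or_neg_one i j with h | h <;> simp [h]

theorem transpose_mul_self [DecidableEq κ] (hX : IsSaturatedOA_s8 X) :
    Xᵀ * X = (Fintype.card ι : R) • (1 : Matrix κ κ R) := by
  ext j k
  obtain rfl | hjk := eq_or_ne j k
  · simp [mul_apply, hX.mul_self_apply]
  · simp [mul_apply, hX.orthogonal j k hjk, hjk]

theorem mul_transpose_self [DecidableEq ι] (hX : IsSaturatedOA_s8 X)
    (hn : IsRegular (Fintype.card ι : R)) :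
    X * Xᵀ = (Fintype.card ι : R) • (1 : Matrix ι ι R) - of fun _ _ ↦ 1 := by
  classical
  let ones : Matrix ι Unit R := of fun _ _ ↦ 1
  have ones_col : onesᵀ * ones = (Fintype.card ι : R) • (1 : Matrix Unit Unit R) := by
    ext; simp [ones, mul_apply]
  have ones_X : onesᵀ * X = 0 := by
    ext; simp [ones, mul_apply, hX.sum_col]
  have X_ones : Xᵀ * ones = 0 := by
    ext; simp [ones, mul_apply, hX.sum_col]
  have columns : (fromCols ones X)ᵀ * fromCols ones X = (Fintype.card ι : R) • 1 := by
    rw [transpose_fromCols, fromRows_mul_fromCols, ones_col, ones_X, X_ones, hX.transpose_mul_self,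
      ← fromBlocks_one, fromBlocks_smul, smul_zero, smul_zero]
  have rows : fromCols ones X * (fromCols ones X)ᵀ = (Fintype.card ι : R) • 1 :=
    mul_eq_smul_one_of_mul_eq_smul_one (by simp [hX.card_eq, add_comm]) hn columns
  rw [transpose_fromCols, fromCols_mul_fromRows] at rows
  rw [← rows, eq_sub_iff_add_eq']
  congr 1
  ext; simp [ones, mul_apply]

theorem jThree_eq_zero (hX : IsSaturatedOA_s8 X) {j k l : κ} (h : j = k ∨ j = l ∨ k = l) :
    jThree X j k l = 0 := by
  unfold jThree
  rcases h with rfl | rfl | rfl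
  · simp [hX.mul_self_apply, hX.sum_col]
  · simp [mul_right_comm, hX.mul_self_apply, hX.sum_col]
  · simp [mul_assoc, hX.mul_self_apply, hX.sum_col]

theorem sum_sum_jThree_sq (hX : IsSaturatedOA_s8 X) (hn : IsRegular (Fintype.card ι : R)) (j₀ : κ) :
    ∑ j, ∑ k, jThree X j₀ j k ^ 2 =
      (Fintype.card ι : R) ^ 2 * ((Fintype.card ι : R) - 2) := by
  classical
  set n : R := (Fintype.card ι : R) with hn_def
  have summand (a b : ι) : X a j₀ * X b j₀ * ((X * Xᵀ) a b) ^ 2 =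
      X a j₀ * X b j₀ + if a = b then n ^ 2 - 2 * n else 0 := by
    rw [hX.mul_transpose_self hn]
    obtain rfl | hab := eq_or_ne a b
    · simp [hX.mul_self_apply]
      ring
    · simp [hab]
  calc ∑ j, ∑ k, jThree X j₀ j k ^ 2
      = ∑ a, ∑ b, X a j₀ * X b j₀ * ((X * Xᵀ) a b) ^ 2 := sum_sum_sum_mul_mul_sq _ X
    _ = (∑ a, X a j₀) * (∑ b, X b j₀) + ∑ _a : ι, (n ^ 2 - 2 * n) := by
        simp only [summand, sum_add_distrib, sum_mul_sum, sum_ite_eq, mem_univ, if_true]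
    _ = n ^ 2 * (n - 2) := by
        rw [hX.sum_col, sum_const, card_univ, nsmul_eq_mul, ← hn_def]
        ring

theorem sum_offDiag_jThree_sq [DecidableEq κ] (hX : IsSaturatedOA_s8 X) (j₀ : κ) :
    ∑ p ∈ (univ.erase j₀).offDiag, jThree X j₀ p.1 p.2 ^ 2 = ∑ j, ∑ k, jThree X j₀ j k ^ 2 := by
  rw [← Fintype.sum_prod_type']
  refine sum_subset (subset_univ _) fun p _ hp ↦ ?_
  have repeated : j₀ = p.1 ∨ j₀ = p.2 ∨ p.1 = p.2 := by
    simp only [mem_offDiag, mem_erase, mem_univ] at hp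
    grind
  simp [hX.jThree_eq_zero repeated]

end IsSaturatedOA_s8

theorem sum_J3_sq_fixed_column_general {ι κ R : Type*} [Fintype ι] [Fintype κ] [DecidableEq κ]
    [CommRing R] {X : Matrix ι κ R} (hX : IsSaturatedOA_s8 X) (hn : IsRegular (Fintype.card ι : R))
    (j₀ : κ) :
    2 * ∑ S ∈ (univ.erase j₀).powersetCard 2, (∑ i, X i j₀ * ∏ j ∈ S, X i j) ^ 2 =
      (Fintype.card ι : R) ^ 2 * ((Fintype.card ι : R) - 2) := by
  rw [← hX.sum_sum_jThree_sq hn j₀, ← hX.sum_offDiag_jThree_sq, ← Nat.cast_ofNat, ← nsmul_eq_mul,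
    two_nsmul_sum_powersetCard_two]
  refine sum_congr rfl fun p hp ↦ ?_
  simp only [jThree, prod_pair (mem_offDiag.1 hp).2.2, mul_assoc]

/-- For a saturated `OA(n, n-1, 2, 2)` with a fixed column `c_{i₀}`,
the sum of `J₃(c_{i₀}, c_j, c_k)²` over all unordered pairs `{c_j, c_k}` of distinct
columns different from `c_{i₀}` equals `n²(n-2)/2`. -/
theorem sum_J3_sq_fixed_column (n : ℕ) (hn : 8 ≤ n) (h4 : 4 ∣ n)
    (H : Fin n → Fin (n - 1) → ℤ)
    (hpm : ∀ i j, H i j = 1 ∨ H i j = -1)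
    (hbal : ∀ j, ∑ i : Fin n, H i j = 0)
    (horth : ∀ j k : Fin (n - 1), j ≠ k → ∑ i : Fin n, H i j * H i k = 0)
    (i0 : Fin (n - 1)) :
    ∑ S ∈ ((Finset.univ : Finset (Fin (n - 1))).erase i0).powersetCard 2,
        (∑ i : Fin n, H i i0 * ∏ j ∈ S, H i j) ^ 2
      = (n : ℤ) ^ 2 * ((n : ℤ) - 2) / 2 := by
  have hH : IsSaturatedOA_s8 (Matrix.of H) := ⟨by simp; omega, hpm, hbal, horth⟩
  have hreg : IsRegular (Fintype.card (Fin n) : ℤ) := .of_ne_zero (by simp; omega)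
  exact Int.eq_ediv_of_mul_eq_right two_ne_zero
    (by simpa using sum_J3_sq_fixed_column_general hH hreg i0)
end

section
/- Let n ≥ 8 be divisible by 4 and let H be a saturated orthogonal array OA(n,n−1,2,2). Let X be the n × (n(n−1)/2) two-level design whose columns are the n−1 columns of H together with the interaction columns of all (n−1 choose 2) unordered pairs of distinct columns of H. Then E(s²)(X) = n²/(n+1), and X is E(s²)-optimal: E(s²)(X) ≤ E(s²)(Y) for every n × (n(n−1)/2) balanced two-level design Y. -/
open Finset

/-- The `E(s²)` value of an `n × m` two-level design `X` (columns indexed by `ι`,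
`m = card ι`): the average of the squared off-diagonal entries of `XᵀX`. -/
noncomputable def Es2 {n : ℕ} {ι : Type} [Fintype ι] [DecidableEq ι]
    (X : Fin n → ι → ℚ) : ℚ :=
  (∑ i : ι, ∑ j : ι, if i ≠ j then (∑ r : Fin n, X r i * X r j) ^ 2 else 0) /
    ((Fintype.card ι : ℚ) * ((Fintype.card ι : ℚ) - 1))

/-!
Transposition turns `E(s²)` into a statement about row inner products: `∑ (XᵀX)ᵢⱼ² = ∑ (XXᵀ)ᵣₛ²`,
both being `tr (XᵀXXᵀX)`. For a balanced design with `m` columns of squared norm `n`, the entries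
of `XXᵀ` sum to `0` and its trace is `nm`, so Cauchy–Schwarz against the projection orthogonal to
the all-ones vector bounds `∑ (XXᵀ)ᵣₛ²` from below by `(nm)² / (n - 1)`. A two-level design attains
this bound when any two distinct rows have inner product `-m / (n - 1)`.

In a saturated orthogonal array, distinct rows have inner product `g = -1`, because the array
extended by a constant column is a multiple of an orthogonal matrix. Adjoining the interaction
columns turns a row inner product `g` into `((g + 1)² - n) / 2`, here `-n / 2 = -m / (n - 1)`.
-/

open Matrix

section RowGram

variable {R ι κ K : Type*} [Fintype R] [Fintype ι]

theorem sum_sq_transpose_mul_self_eq [CommSemiring K] (X : Matrix R ι K) :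
    ∑ i, ∑ j, (Xᵀ * X) i j ^ 2 = ∑ r, ∑ s, (X * Xᵀ) r s ^ 2 := by
  calc
    ∑ i, ∑ j, (Xᵀ * X) i j ^ 2 = trace ((Xᵀ * X) * (Xᵀ * X)ᵀ) := by
      simp only [← sum_hadamard_eq, hadamard_apply, sq]
    _ = trace ((X * Xᵀ) * (X * Xᵀ)ᵀ) := by
      rw [transpose_mul, transpose_mul, transpose_transpose, Matrix.mul_assoc, trace_mul_comm,
        Matrix.mul_assoc, Matrix.mul_assoc, Matrix.mul_assoc]
    _ = ∑ r, ∑ s, (X * Xᵀ) r s ^ 2 := by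
      simp only [← sum_hadamard_eq, hadamard_apply, sq]

theorem sum_mul_transpose_eq_zero [Semiring K] {X : Matrix R ι K}
    (hbal : ∀ j, ∑ i, X i j = 0) : ∑ r, ∑ s, (X * Xᵀ) r s = 0 := by
  have hrow (r : R) : ∑ s, (X * Xᵀ) r s = 0 := by
    simp only [mul_apply, transpose_apply]
    rw [Finset.sum_comm]
    simp [← Finset.mul_sum, hbal]
  simp [hrow]

theorem trace_mul_transpose_self_eq [CommSemiring K] {X : Matrix R ι K} {c : K}
    (hnorm : ∀ j, ∑ i, X i j ^ 2 = c) : trace (X * Xᵀ) = Fintype.card ι * c := by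
  rw [trace_mul_comm]
  simp [trace, mul_apply, ← sq, hnorm]

theorem sq_trace_le_of_sum_eq_zero [Field K] [LinearOrder K] [IsStrictOrderedRing K]
    {A : Matrix R R K} (hA : ∑ r, ∑ s, A r s = 0) :
    trace A ^ 2 ≤ (Fintype.card R - 1) * ∑ r, ∑ s, A r s ^ 2 := by
  classical
  cases isEmpty_or_nonempty R
  · simp [trace]
  have hR : (Fintype.card R : K) ≠ 0 := by simp
  let P (r s : R) : K := (if r = s then 1 else 0) - (Fintype.card R : K)⁻¹
  have hAP : ∑ r, ∑ s, A r s * P r s = trace A := by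
    simp [P, mul_sub, Finset.sum_sub_distrib, ← Finset.sum_mul, hA, trace]
  have hPP : ∑ r, ∑ s, P r s ^ 2 = (Fintype.card R : K) - 1 := by
    have hP (r s : R) : P r s ^ 2 =
        (if r = s then 1 - 2 * (Fintype.card R : K)⁻¹ else 0) + (Fintype.card R : K)⁻¹ ^ 2 := by
      split_ifs with h
      · simp only [P, if_pos h]
        ring
      · simp [P, h]
    simp only [hP, Finset.sum_add_distrib, Finset.sum_ite_eq, Finset.mem_univ, if_true,
      Finset.sum_const, Finset.card_univ, nsmul_eq_mul]
    field_simp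
    ring
  have hCS := Finset.sum_mul_sq_le_sq_mul_sq (univ : Finset (R × R))
    (fun p => A p.1 p.2) (fun p => P p.1 p.2)
  simp only [Fintype.sum_prod_type, hAP, hPP] at hCS
  linarith

theorem mul_transpose_eq_of_saturated [DecidableEq R] [Fintype κ] [DecidableEq κ]
    [Field K] [CharZero K] {H : Matrix R κ K} (hcard : Fintype.card κ + 1 = Fintype.card R)
    (hbal : ∀ j, ∑ i, H i j = 0) (horth : Hᵀ * H = (Fintype.card R : K) • 1) :
    H * Hᵀ = (Fintype.card R : K) • 1 - of fun _ _ => 1 := by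
  set N : K := (Fintype.card R : K)
  have hN : N ≠ 0 := Nat.cast_ne_zero.2 (by omega)
  let u : Matrix R Unit K := of fun _ _ => 1
  have huu : uᵀ * u = N • 1 := by ext; simp [u, mul_apply, N]
  have huH : uᵀ * H = 0 := by ext; simp [u, mul_apply, hbal]
  have hHu : Hᵀ * u = 0 := by ext; simp [u, mul_apply, hbal]
  have hleft : (N⁻¹ • fromRows uᵀ Hᵀ) * fromCols u H = 1 := by
    rw [smul_mul, fromRows_mul_fromCols, huu, huH, hHu, horth, fromBlocks_smul]
    simp [hN]
  have hright : fromCols u H * (N⁻¹ • fromRows uᵀ Hᵀ) = 1 :=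
    (mul_eq_one_comm_of_card_eq _ _ _ (by simp [← hcard, add_comm])).1 hleft
  rw [Matrix.mul_smul, fromCols_mul_fromRows, inv_smul_eq_iff₀ hN] at hright
  rw [← hright]
  ext
  simp [u, mul_apply]

end RowGram

section Interactions

variable {R κ K : Type*} [LinearOrder κ]

/-- The design `H` augmented with the interaction columns of all unordered pairs of distinct
columns, a pair being encoded by its increasing enumeration. -/
def withInteractions [Mul K] (H : Matrix R κ K) :
    Matrix R (κ ⊕ {p : κ × κ // p.1 < p.2}) K :=
  of fun r => Sum.elim (H r) fun p => H r p.1.1 * H r p.1.2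

theorem withInteractions_sq_eq_one [CommMonoid K] {H : Matrix R κ K}
    (hH : ∀ r j, H r j ^ 2 = 1) (r : R) (i : κ ⊕ {p : κ × κ // p.1 < p.2}) :
    withInteractions H r i ^ 2 = 1 := by
  cases i <;> simp [withInteractions, mul_pow, hH]

variable [Fintype κ]

theorem sq_sum_eq_sum_sq_add_two_mul_sum_lt [CommSemiring K] (a : κ → K) :
    (∑ i, a i) ^ 2 =
      ∑ i, a i ^ 2 + 2 * ∑ p : {p : κ × κ // p.1 < p.2}, a p.1.1 * a p.1.2 := by
  have hlt : ∑ p : {p : κ × κ // p.1 < p.2}, a p.1.1 * a p.1.2 =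
      ∑ i, ∑ j, if i < j then a i * a j else 0 := by
    rw [← Fintype.sum_prod_type' (f := fun i j => if i < j then a i * a j else 0),
      ← Finset.sum_filter]
    exact (Finset.sum_subtype _ (by simp) fun p : κ × κ => a p.1 * a p.2).symm
  have hgt : ∑ p : {p : κ × κ // p.1 < p.2}, a p.1.1 * a p.1.2 =
      ∑ i, ∑ j, if j < i then a i * a j else 0 := by
    rw [hlt, Finset.sum_comm]
    simp only [mul_comm]
  have heq : ∑ i, a i ^ 2 = ∑ i, ∑ j, if i = j then a i * a j else 0 := by simp [sq]
  rw [two_mul]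
  nth_rewrite 1 [hlt]
  rw [hgt, heq, sq, Finset.sum_mul_sum]
  simp only [← Finset.sum_add_distrib]
  refine Finset.sum_congr rfl fun i _ => Finset.sum_congr rfl fun j _ => ?_
  rcases lt_trichotomy i j with h | rfl | h
  · simp [h, h.not_gt, h.ne]
  · simp
  · simp [h, h.not_gt, h.ne']

theorem two_mul_card_sum_lt_pairs :
    2 * Fintype.card (κ ⊕ {p : κ × κ // p.1 < p.2}) =
      Fintype.card κ * (Fintype.card κ + 1) := by
  have hsq := sq_sum_eq_sum_sq_add_two_mul_sum_lt fun _ : κ => 1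
  simp only [Finset.sum_const, Finset.card_univ, one_pow, mul_one, smul_eq_mul] at hsq
  rw [Fintype.card_sum]
  linarith

theorem two_mul_withInteractions_mul_transpose_apply [CommRing K] {H : Matrix R κ K}
    (hH : ∀ r j, H r j ^ 2 = 1) (r s : R) :
    2 * (withInteractions H * (withInteractions H)ᵀ) r s =
      ((H * Hᵀ) r s + 1) ^ 2 - (Fintype.card κ + 1) := by
  have hsq := sq_sum_eq_sum_sq_add_two_mul_sum_lt fun j => H r j * H s j
  simp only [mul_pow, hH, mul_one, Finset.sum_const, Finset.card_univ, nsmul_eq_mul] at hsq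
  simp only [withInteractions, mul_apply, transpose_apply, of_apply, Fintype.sum_sum_type,
    Sum.elim_inl, Sum.elim_inr, mul_mul_mul_comm (H r _) (H r _)]
  linear_combination -hsq

theorem withInteractions_mul_transpose_apply_of_saturated [Fintype R] [Field K] [CharZero K]
    {H : Matrix R κ K} (hcard : Fintype.card κ + 1 = Fintype.card R)
    (hH : ∀ r j, H r j ^ 2 = 1) (hbal : ∀ j, ∑ i, H i j = 0)
    (horth : Pairwise fun j k => ∑ i, H i j * H i k = 0) {r s : R} (hrs : r ≠ s) :
    (withInteractions H * (withInteractions H)ᵀ) r s = -(Fintype.card R / 2) := by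
  classical
  have hgram : Hᵀ * H = (Fintype.card R : K) • 1 := by
    ext j k
    rcases eq_or_ne j k with rfl | hjk
    · simp [mul_apply, ← sq, hH]
    · simp [mul_apply, horth hjk, hjk]
  have hrow : (H * Hᵀ) r s = -1 := by
    simp [mul_transpose_eq_of_saturated hcard hbal hgram, hrs]
  have hR : (Fintype.card R : K) = Fintype.card κ + 1 := by simp [← hcard]
  linear_combination (two_mul_withInteractions_mul_transpose_apply hH r s
    + ((H * Hᵀ) r s + 1) * hrow + hR) / 2

end Interactions

section Es2

/-- The lower bound of Nguyen and Tang–Wu for the `E(s²)` value of a balanced two-level design with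
`n` rows and `m` columns; a junk value if `n = 1` or `m = 1`. -/
def es2Bound (n m : ℚ) : ℚ :=
  n ^ 2 * (m - n + 1) / ((n - 1) * (m - 1))

theorem es2Bound_of_two_mul_eq {n m : ℚ} (hn : 2 < n) (hm : 2 * m = n * (n - 1)) :
    es2Bound n m = n ^ 2 / (n + 1) := by
  obtain rfl : m = n * (n - 1) / 2 := by linarith
  have hfactor : n * (n - 1) / 2 - 1 = (n - 2) * (n + 1) / 2 := by ring
  have h₁ : n - 1 ≠ 0 := by linarith
  have h₂ : n - 2 ≠ 0 := by linarith
  have h₃ : n + 1 ≠ 0 := by linarith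
  rw [es2Bound, hfactor]
  field_simp
  ring

variable {n : ℕ} {ι : Type} [Fintype ι] [DecidableEq ι] {X : Matrix (Fin n) ι ℚ}

theorem Es2_eq_sum_sq_mul_transpose (hnorm : ∀ j, ∑ i, X i j ^ 2 = n) :
    Es2 X = (∑ r, ∑ s, (X * Xᵀ) r s ^ 2 - Fintype.card ι * (n : ℚ) ^ 2) /
      (Fintype.card ι * (Fintype.card ι - 1)) := by
  have hoff (i j : ι) : (if i ≠ j then (∑ r, X r i * X r j) ^ 2 else 0) =
      (Xᵀ * X) i j ^ 2 - if i = j then (n : ℚ) ^ 2 else 0 := by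
    rcases eq_or_ne i j with rfl | hij
    · simp [mul_apply, ← sq, hnorm]
    · simp [mul_apply, hij]
  simp only [Es2, hoff, Finset.sum_sub_distrib, sum_sq_transpose_mul_self_eq]
  simp

theorem es2Bound_le_Es2 (hn : 1 < n) (hι : 1 < Fintype.card ι)
    (hnorm : ∀ j, ∑ i, X i j ^ 2 = n) (hbal : ∀ j, ∑ i, X i j = 0) :
    es2Bound n (Fintype.card ι) ≤ Es2 X := by
  have hCS := sq_trace_le_of_sum_eq_zero (sum_mul_transpose_eq_zero hbal)
  rw [trace_mul_transpose_self_eq hnorm, Fintype.card_fin] at hCS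
  rw [Es2_eq_sum_sq_mul_transpose hnorm, es2Bound]
  have hn' : (0 : ℚ) < n - 1 := sub_pos.2 (mod_cast hn)
  have hm' : (0 : ℚ) < Fintype.card ι - 1 := sub_pos.2 (mod_cast hι)
  have hm : (0 : ℚ) < Fintype.card ι := by linarith
  generalize (Fintype.card ι : ℚ) = m at *
  generalize ∑ r, ∑ s, (X * Xᵀ) r s ^ 2 = T at *
  calc
    (n : ℚ) ^ 2 * (m - n + 1) / ((n - 1) * (m - 1))
        = ((m * n) ^ 2 / (n - 1) - m * n ^ 2) / (m * (m - 1)) := by field_simp; ring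
    _ ≤ (T - m * n ^ 2) / (m * (m - 1)) := by
      gcongr
      exact (div_le_iff₀' hn').2 hCS

theorem Es2_eq_es2Bound_of_mul_transpose_apply_eq (hn : 1 < n) (hι : 1 < Fintype.card ι)
    (htwo : ∀ r i, X r i ^ 2 = 1)
    (hrows : ∀ r s, r ≠ s → (X * Xᵀ) r s = -(Fintype.card ι / (n - 1))) :
    Es2 X = es2Bound n (Fintype.card ι) := by
  rw [Es2_eq_sum_sq_mul_transpose (by simp [htwo]), es2Bound]
  have hn' : (n : ℚ) - 1 ≠ 0 := (sub_pos.2 (mod_cast hn)).ne'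
  have hm' : (Fintype.card ι : ℚ) - 1 ≠ 0 := (sub_pos.2 (mod_cast hι)).ne'
  have hm : (Fintype.card ι : ℚ) ≠ 0 := by positivity
  have hdiag (r : Fin n) : (X * Xᵀ) r r = Fintype.card ι := by
    simp [mul_apply, ← sq, htwo]
  generalize (Fintype.card ι : ℚ) = m at *
  have hsq (r s : Fin n) : (X * Xᵀ) r s ^ 2 =
      (m / (n - 1)) ^ 2 + if r = s then m ^ 2 - (m / (n - 1)) ^ 2 else 0 := by
    rcases eq_or_ne r s with rfl | hrs
    · simp [hdiag]
    · simp [hrows r s hrs, hrs]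
  simp only [hsq, Finset.sum_add_distrib, Finset.sum_ite_eq, Finset.mem_univ, if_true,
    Finset.sum_const, Finset.card_univ, Fintype.card_fin, nsmul_eq_mul]
  field_simp
  ring

theorem Es2_withInteractions_eq_es2Bound {κ : Type} [LinearOrder κ] [Fintype κ]
    {H : Matrix (Fin n) κ ℚ} (hn : 3 ≤ n) (hcard : Fintype.card κ + 1 = n)
    (hH : ∀ r j, H r j ^ 2 = 1) (hbal : ∀ j, ∑ i, H i j = 0)
    (horth : Pairwise fun j k => ∑ i, H i j * H i k = 0) :
    Es2 (withInteractions H) =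
      es2Bound n (Fintype.card (κ ⊕ {p : κ × κ // p.1 < p.2})) := by
  have hκ : 2 ≤ Fintype.card κ := by omega
  have htwice := two_mul_card_sum_lt_pairs (κ := κ)
  refine Es2_eq_es2Bound_of_mul_transpose_apply_eq (by omega) (by nlinarith)
    (withInteractions_sq_eq_one hH) fun r s hrs => ?_
  have hn' : (n : ℚ) - 1 = Fintype.card κ := by simp [← hcard]
  have hκ' : (Fintype.card κ : ℚ) ≠ 0 := by positivity
  have htwice' : 2 * (Fintype.card (κ ⊕ {p : κ × κ // p.1 < p.2}) : ℚ) = Fintype.card κ * n := by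
    rw [← hcard]
    exact_mod_cast htwice
  rw [withInteractions_mul_transpose_apply_of_saturated (by simpa using hcard) hH hbal horth hrs,
    Fintype.card_fin, hn', neg_inj, div_eq_div_iff two_ne_zero hκ']
  linarith

end Es2

theorem Es2_optimal_full_general (n : ℕ) (hn : 3 ≤ n)
    (H : Fin n → Fin (n - 1) → ℚ)
    (hpm : ∀ i j, H i j = 1 ∨ H i j = -1)
    (hbal : ∀ j, ∑ i : Fin n, H i j = 0)
    (horth : ∀ j k : Fin (n - 1), j ≠ k → ∑ i : Fin n, H i j * H i k = 0)
    (X : Fin n → (Fin (n - 1) ⊕ {p : Fin (n - 1) × Fin (n - 1) // p.1 < p.2}) → ℚ)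
    (hX : ∀ r, X r = Sum.elim (fun j => H r j) (fun p => H r p.1.1 * H r p.1.2)) :
    Es2 X = (n : ℚ) ^ 2 / ((n : ℚ) + 1) ∧
      ∀ Y : Fin n → Fin (n * (n - 1) / 2) → ℚ,
        (∀ j, ∑ i : Fin n, Y i j ^ 2 = n) → (∀ j, ∑ i : Fin n, Y i j = 0) →
          Es2 X ≤ Es2 Y := by
  obtain rfl : X = withInteractions H := funext hX
  have hH (i j) : H i j ^ 2 = 1 := sq_eq_one_iff.2 (hpm i j)
  have hcard : Fintype.card (Fin (n - 1) ⊕ {p : Fin (n - 1) × Fin (n - 1) // p.1 < p.2}) =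
      n * (n - 1) / 2 := by
    have htwice := two_mul_card_sum_lt_pairs (κ := Fin (n - 1))
    rw [Fintype.card_fin, Nat.sub_add_cancel (by omega), mul_comm (n - 1)] at htwice
    omega
  have hm : 1 < n * (n - 1) / 2 := by
    have : 3 * 2 ≤ n * (n - 1) := Nat.mul_le_mul hn (by omega)
    omega
  have hmq : 2 * ((n * (n - 1) / 2 : ℕ) : ℚ) = n * (n - 1) := by
    rw [← Nat.cast_pred (by omega)]
    exact_mod_cast Nat.mul_div_cancel' (Nat.even_mul_pred_self n).two_dvd
  have hnq : (2 : ℚ) < n := mod_cast hn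
  have hXbound : Es2 (withInteractions H) = es2Bound n (n * (n - 1) / 2 : ℕ) := by
    rw [← hcard]
    exact Es2_withInteractions_eq_es2Bound hn (by simp; omega) hH hbal horth
  refine ⟨hXbound.trans (es2Bound_of_two_mul_eq hnq hmq), fun Y hnorm hYbal => ?_⟩
  rw [hXbound]
  simpa using es2Bound_le_Es2 (by omega) (by simpa using hm) hnorm hYbal

/-- Augmenting a saturated `OA(n, n-1, 2, 2)` with all its two-column
interaction columns yields an `n × (n(n-1)/2)` design `X` with `E(s²)(X) = n²/(n+1)`,
which is `E(s²)`-optimal among all balanced `n × (n(n-1)/2)` two-level designs. -/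
theorem Es2_optimal_full (n : ℕ) (hn : 8 ≤ n) (h4 : 4 ∣ n)
    (H : Fin n → Fin (n - 1) → ℚ)
    (hpm : ∀ i j, H i j = 1 ∨ H i j = -1)
    (hbal : ∀ j, ∑ i : Fin n, H i j = 0)
    (horth : ∀ j k : Fin (n - 1), j ≠ k → ∑ i : Fin n, H i j * H i k = 0)
    (X : Fin n → (Fin (n - 1) ⊕ {p : Fin (n - 1) × Fin (n - 1) // p.1 < p.2}) → ℚ)
    (hX : ∀ r, X r = Sum.elim (fun j => H r j) (fun p => H r p.1.1 * H r p.1.2)) :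
    Es2 X = (n : ℚ) ^ 2 / ((n : ℚ) + 1) ∧
      ∀ Y : Fin n → Fin (n * (n - 1) / 2) → ℚ,
        (∀ i j, Y i j = 1 ∨ Y i j = -1) → (∀ j, ∑ i : Fin n, Y i j = 0) →
          Es2 X ≤ Es2 Y := by
  obtain ⟨hval, hopt⟩ := Es2_optimal_full_general n (by omega) H hpm hbal horth X hX
  exact ⟨hval, fun Y hY => hopt Y fun j => by simp [sq_eq_one_iff.2 (hY _ j)]⟩
end
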